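/- Generalized Cartan bound: let T ⊆ Λ^{k+1}(W;V) be a tableau of k-derivations with trivial symbol, let 0 = W_0 ⊂ … ⊂ W_n = W be a full flag with Cartan characters s_i, and for l ≥ 1 let L = ker(δ : Λ^l(W;T) → Λ^{k+l+1}(W;V)). Then dim L ≤ Σ_{i=1}^{n} s_i · ( C(n,l) − C(n−i,l) ), where C(a,b) denotes the binomial coefficient. -/

import Mathlib

open Module

variable {W : Type*} [AddCommGroup W] [Module ℝ W] [FiniteDimensional ℝ W]
variable {V : Type*} [AddCommGroup V] [Module ℝ V] [FiniteDimensional ℝ V]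

/-- The alternating `m`-linear maps `W^m → V` vanishing whenever all of their arguments lie
in the subspace `U ⊆ W`.  For a tableau `T ⊆ Λ^m(W;V)`, the subspace `T_U` is
`T ⊓ vanishingOn m U`. -/
def vanishingOn (m : ℕ) (U : Submodule ℝ W) :
    Submodule ℝ (AlternatingMap ℝ W V (Fin m)) where
  carrier := {c | ∀ u : Fin m → W, (∀ i, u i ∈ U) → c u = 0}
  zero_mem' := by intro u _; simp
  add_mem' := by intro a b ha hb u hu; simp [ha u hu, hb u hu]
  smul_mem' := by intro r a ha u hu; simp [ha u hu]

/-- The kernel `L = ker(δ : Λ^l(W;T) → Λ^{k+l+1}(W;V))` of the Spencer differential, where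
`δ` sends `ξ` to the full alternation of `(w₁,…,w_l,u₀,…,u_k) ↦ ξ(w₁,…,w_l)(u₀,…,u_k)`;
elements are alternating `l`-linear maps with values in the tableau `T ⊆ Λ^{k+1}(W;V)`
killed by the alternation. -/
def spencerKernel (k l : ℕ) (T : Submodule ℝ (AlternatingMap ℝ W V (Fin (k + 1)))) :
    Submodule ℝ (AlternatingMap ℝ W (AlternatingMap ℝ W V (Fin (k + 1))) (Fin l)) where
  carrier := {ξ | (∀ w : Fin l → W, ξ w ∈ T) ∧
    ∀ w : Fin (l + (k + 1)) → W,
      ∑ σ : Equiv.Perm (Fin (l + (k + 1))),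
        ((Equiv.Perm.sign σ : ℤ) : ℝ) •
          ξ (fun j : Fin l => w (σ (Fin.castAdd (k + 1) j)))
            (fun j : Fin (k + 1) => w (σ (Fin.natAdd l j))) = 0}
  zero_mem' := by
    refine ⟨fun w => T.zero_mem, fun w => ?_⟩
    simp
  add_mem' := by
    rintro a b ⟨ha1, ha2⟩ ⟨hb1, hb2⟩
    refine ⟨fun w => T.add_mem (ha1 w) (hb1 w), fun w => ?_⟩
    have h := ha2 w
    have h' := hb2 w
    simp only [AlternatingMap.add_apply, smul_add, Finset.sum_add_distrib, h, h', add_zero]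
  smul_mem' := by
    rintro c ξ ⟨h1, h2⟩
    refine ⟨fun w => T.smul_mem c (h1 w), fun w => ?_⟩
    have h := h2 w
    calc ∑ σ : Equiv.Perm (Fin (l + (k + 1))),
          ((Equiv.Perm.sign σ : ℤ) : ℝ) •
            (c • ξ) (fun j : Fin l => w (σ (Fin.castAdd (k + 1) j)))
              (fun j : Fin (k + 1) => w (σ (Fin.natAdd l j)))
        = c • ∑ σ : Equiv.Perm (Fin (l + (k + 1))),
            ((Equiv.Perm.sign σ : ℤ) : ℝ) •
              ξ (fun j : Fin l => w (σ (Fin.castAdd (k + 1) j)))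
                (fun j : Fin (k + 1) => w (σ (Fin.natAdd l j))) := by
          rw [Finset.smul_sum]
          refine Finset.sum_congr rfl fun σ _ => ?_
          rw [AlternatingMap.smul_apply, AlternatingMap.smul_apply, smul_comm]
      _ = 0 := by rw [h, smul_zero]

/-!
If `ξ ∈ L` and `U ⊆ W` is a subspace such that `ξ w = 0` as soon as one `w i` lies in `U`, then
every value `ξ w` vanishes on `U`: for `u` with entries in `U`, the terms of the alternation of
`(w, u) ↦ ξ w u` which move some `u j` into the first block are zero, and all the others are equal
to `ξ w u`.

Choose a basis `e` adapted to the flag. An element `ξ ∈ L` is determined by its values `ξ e_J` on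
the `l`-subsets `J` of the basis, and once `ξ e_J'` vanishes for all `J'` with `min J' < min J`,
the previous remark forces `ξ e_J` into `T_{W_m}`, where `W_m` is spanned by the basis vectors
preceding all of `J`. This triangularity gives `dim L ≤ ∑_J dim T_{W_m}`. Finally `dim T_{W_m}` is
the sum of the characters `s_i` with `i > m`, and `s_i` occurs once for each `J` which contains one
of the first `i` basis vectors, that is `C(n,l) − C(n−i,l)` times.
-/

open Equiv Finset
open Set.powersetCard (ofFinEmbEquiv)

section LinearAlgebra

variable {K E : Type*} [DivisionRing K] [AddCommGroup E] [Module K E]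

theorem finrank_le_sum_finrank_of_triangular {L ι : Type*} {M : ι → Type*} [AddCommGroup L]
    [Module K L] [∀ j, AddCommGroup (M j)] [∀ j, Module K (M j)] [Fintype ι] {r : ι → ι → Prop}
    (hr : WellFounded r) (φ : ∀ j, L →ₗ[K] M j) (S : ∀ j, Submodule K (M j))
    [∀ j, FiniteDimensional K (S j)]
    (hS : ∀ x j, (∀ i, r i j → φ i x = 0) → φ j x ∈ S j) (hφ : ∀ x, (∀ j, φ j x = 0) → x = 0) :
    finrank K L ≤ ∑ j, finrank K (S j) := by
  choose p hp using fun j =>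
    (S j).subtype.exists_leftInverse_of_injective (Submodule.ker_subtype _)
  rw [← finrank_pi_fintype]
  refine LinearMap.finrank_le_finrank_of_injective (f := LinearMap.pi fun j => p j ∘ₗ φ j) ?_
  refine (injective_iff_map_eq_zero _).2 fun x hx => hφ x fun j => ?_
  induction j using hr.induction with
  | _ j ih =>
    have hretract : p j (φ j x) = ⟨φ j x, hS x j ih⟩ :=
      LinearMap.congr_fun (hp j) ⟨φ j x, hS x j ih⟩
    exact congrArg Subtype.val (hretract.symm.trans (congrFun hx j))

theorem exists_eq_span_singleton_sup_of_finrank_eq_succ {p q : Submodule K E} (hpq : p ≤ q)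
    (h : finrank K q = finrank K p + 1) : ∃ x, q = K ∙ x ⊔ p := by
  have : FiniteDimensional K q := .of_finrank_pos (by omega)
  obtain ⟨x, hxq, hxp⟩ := SetLike.exists_of_lt (hpq.lt_of_ne fun hEq => by subst hEq; omega)
  have hle : K ∙ x ⊔ p ≤ q := sup_le ((Submodule.span_singleton_le_iff_mem _ _).2 hxq) hpq
  have : FiniteDimensional K ↥(K ∙ x ⊔ p) := Submodule.finiteDimensional_of_le hle
  have hlt : p < K ∙ x ⊔ p :=
    right_lt_sup.2 fun hx => hxp (hx (Submodule.mem_span_singleton_self x))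
  refine ⟨x, (Submodule.eq_of_le_of_finrank_le hle ?_).symm⟩
  have := Submodule.finrank_lt_finrank_of_lt hlt
  omega

theorem exists_basis_flag_eq {n : ℕ} (U : Fin (n + 1) → Submodule K E) (hmono : Monotone U)
    (hbot : U 0 = ⊥) (htop : U (Fin.last n) = ⊤) (hdim : ∀ i, finrank K (U i) = (i : ℕ)) :
    ∃ e : Basis (Fin n) K E, e.flag = U := by
  choose v hv using fun i : Fin n =>
    exists_eq_span_singleton_sup_of_finrank_eq_succ (hmono i.castSucc_lt_succ.le) (by simp [hdim])
  have hspan (m) : U m ≤ Submodule.span K (Set.range v) := by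
    induction m using Fin.induction with
    | zero => simp [hbot]
    | succ m ih =>
      rw [hv]
      exact sup_le (Submodule.span_mono (by simp)) ih
  have hcard : Fintype.card (Fin n) = finrank K E := by
    rw [← finrank_top K E, ← htop, hdim, Fintype.card_fin, Fin.val_last]
  refine ⟨basisOfTopLeSpanOfCardEqFinrank v (htop ▸ hspan _) hcard, funext fun m => ?_⟩
  induction m using Fin.induction with
  | zero => rw [Basis.flag_zero, hbot]
  | succ m ih => rw [Basis.flag_succ, ih, coe_basisOfTopLeSpanOfCardEqFinrank, hv]

end LinearAlgebra

section Multilinear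

theorem multilinearMap_apply_eq_zero_of_mem_span {R ι N : Type*} {M : ι → Type*} [CommSemiring R]
    [∀ i, AddCommMonoid (M i)] [∀ i, Module R (M i)] [AddCommMonoid N] [Module R N] [Finite ι]
    (f : MultilinearMap R M N) {s : ∀ i, Set (M i)} (hs : ∀ u, (∀ i, u i ∈ s i) → f u = 0)
    {u : ∀ i, M i} (hu : ∀ i, u i ∈ Submodule.span R (s i)) : f u = 0 := by
  classical
  have := Fintype.ofFinite ι
  suffices h : ∀ t : Finset ι, ∀ u : ∀ i, M i, (∀ i ∈ t, u i ∈ Submodule.span R (s i)) →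
      (∀ i ∉ t, u i ∈ s i) → f u = 0 from h univ u (fun i _ => hu i) (by simp)
  intro t
  induction t using Finset.induction_on with
  | empty => exact fun u _ hu => hs u (by simpa using hu)
  | insert j t hj ih =>
    intro u hspan hmem
    have hker : Submodule.span R (s j) ≤ LinearMap.ker (f.toLinearMap u j) := by
      refine Submodule.span_le.2 fun x hx => ih _ (fun i hi => ?_) fun i hi => ?_
      · rw [Function.update_of_ne (ne_of_mem_of_not_mem hi hj)]
        exact hspan i (mem_insert_of_mem hi)
      · obtain rfl | hij := eq_or_ne i j
        · rwa [Function.update_self]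
        · rw [Function.update_of_ne hij]
          exact hmem i (by simp [hij, hi])
    simpa using hker (hspan j (mem_insert_self j t))

end Multilinear

section Alternating

variable {R E F : Type*} [CommRing R] [AddCommGroup E] [Module R E] [AddCommGroup F] [Module R F]

instance instFiniteAlternatingMap [Module.Finite R E] [Module.Free R E] [Module.Finite R F]
    (m : ℕ) : Module.Finite R (E [⋀^Fin m]→ₗ[R] F) :=
  .equiv exteriorPower.alternatingMapLinearEquiv.symm

theorem alternatingMap_comp_eq_zero_of_sorted {α : Type*} [LinearOrder α] {l : ℕ}
    (f : E [⋀^Fin l]→ₗ[R] F) (e : α → E) (v : Fin l → α)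
    (h : ∀ J : Set.powersetCard α l, (J : Set α) = Set.range v →
      f (e ∘ ofFinEmbEquiv.symm J) = 0) : f (e ∘ v) = 0 := by
  by_cases hv : Function.Injective v
  · let s : Fin l ↪o α := .ofStrictMono (v ∘ Tuple.sort v)
      ((Tuple.monotone_sort v).strictMono_of_injective (hv.comp (Tuple.sort v).injective))
    have hs : f ((e ∘ v) ∘ Tuple.sort v) = 0 := by
      have := h (ofFinEmbEquiv s) (by ext; simp [s])
      rwa [symm_apply_apply] at this
    rwa [f.map_perm, smul_eq_zero_iff_eq] at hs
  · exact f.map_eq_zero_of_not_injective _ (mt Function.Injective.of_comp hv)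

/-- `J.inf Fin.castSucc` is the largest `m` such that all of `e 0, …, e (m - 1)` precede `J`; for
`J = ∅` it is `Fin.last n`. -/
theorem alternatingMap_eq_zero_of_mem_flag {n l : ℕ} (e : Basis (Fin n) R E)
    (f : E [⋀^Fin l]→ₗ[R] F) (m : Fin (n + 1))
    (h : ∀ J : Set.powersetCard (Fin n) l, J.1.inf Fin.castSucc < m →
      f (e ∘ ofFinEmbEquiv.symm J) = 0)
    {w : Fin l → E} {i : Fin l} (hw : w i ∈ e.flag m) : f w = 0 := by
  let s (j : Fin l) : Set (Fin n) := {a | j = i → a.castSucc < m}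
  refine multilinearMap_apply_eq_zero_of_mem_span f.toMultilinearMap (s := fun j => e '' s j)
    (fun u hu => ?_) fun j => ?_
  · choose v hv hvu using hu
    obtain rfl : e ∘ v = u := funext hvu
    refine alternatingMap_comp_eq_zero_of_sorted f e v fun J hJ => h J ?_
    have hmem : v i ∈ J.1 := by
      rw [← Finset.mem_coe]
      exact hJ ▸ Set.mem_range_self i
    exact (Finset.inf_le hmem).trans_lt (hv i rfl)
  · obtain rfl | hj := eq_or_ne j i
    · simpa [s, Basis.flag] using hw
    · simp [s, hj]

variable {ι κ : Type*} [Fintype ι] [Fintype κ] [DecidableEq ι] [DecidableEq κ]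
  (ξ : E [⋀^ι]→ₗ[R] (E [⋀^κ]→ₗ[R] F)) (w : ι ⊕ κ → E)

theorem sign_smul_apply_sumCongr (σ : Perm ι) (τ : Perm κ) :
    Perm.sign (σ.sumCongr τ) • ξ (w ∘ σ.sumCongr τ ∘ Sum.inl) (w ∘ σ.sumCongr τ ∘ Sum.inr) =
      ξ (w ∘ Sum.inl) (w ∘ Sum.inr) := by
  change _ • ξ ((w ∘ Sum.inl) ∘ σ) ((w ∘ Sum.inr) ∘ τ) = _
  rw [ξ.map_perm, AlternatingMap.smul_apply, AlternatingMap.map_perm, Perm.sign_sumCongr, mul_smul,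
    smul_comm (Perm.sign τ), smul_smul (Perm.sign σ), Int.units_mul_self, one_smul, smul_smul,
    Int.units_mul_self, one_smul]

theorem sum_perm_sign_smul_apply_eq_factorial_smul
    (h : ∀ σ : Perm (ι ⊕ κ), (∃ i j, σ (.inl i) = .inr j) → ξ (w ∘ σ ∘ Sum.inl) = 0) :
    ∑ σ : Perm (ι ⊕ κ), Perm.sign σ • ξ (w ∘ σ ∘ Sum.inl) (w ∘ σ ∘ Sum.inr) =
      ((Fintype.card ι).factorial * (Fintype.card κ).factorial) •
        ξ (w ∘ Sum.inl) (w ∘ Sum.inr) := by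
  rw [← Fintype.card_perm, ← Fintype.card_perm, ← Fintype.card_prod, ← card_univ, ← sum_const]
  refine (Fintype.sum_of_injective (Perm.sumCongrHom ι κ) Perm.sumCongrHom_injective _ _
    (fun σ hσ => ?_) fun στ => (sign_smul_apply_sumCongr ξ w στ.1 στ.2).symm).symm
  suffices hmix : ∃ i j, σ (.inl i) = .inr j by
    rw [h σ hmix, AlternatingMap.zero_apply, smul_zero]
  by_contra! hno
  refine hσ (Perm.mem_sumCongrHom_range_of_perm_mapsTo_inl ?_)
  rintro _ ⟨i, rfl⟩
  rcases hi : σ (.inl i) with a | j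
  · exact ⟨a, rfl⟩
  · exact absurd hi (hno i j)

end Alternating

section Combinatorics

theorem card_filter_not_subset_powersetCard {α : Type*} [Fintype α] [DecidableEq α] (s : Finset α)
    (l : ℕ) :
    #{J ∈ powersetCard l univ | ¬ J ⊆ s} = (Fintype.card α).choose l - (#s).choose l := by
  have hfilter : (powersetCard l univ).filter (¬ · ⊆ s) =
      powersetCard l univ \ powersetCard l s := by
    ext J
    simp only [mem_filter, mem_sdiff, mem_powersetCard]
    tauto
  rw [hfilter, card_sdiff_of_subset (powersetCard_mono s.subset_univ), card_powersetCard,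
    card_powersetCard, card_univ]

theorem inf_castSucc_le_castSucc_iff {n : ℕ} {J : Finset (Fin n)} {i : Fin n} :
    J.inf Fin.castSucc ≤ i.castSucc ↔ ¬ J ⊆ Ioi i := by
  rw [← not_lt, Finset.lt_inf_iff (by simp [Fin.top_eq_last, Fin.castSucc_lt_last])]
  simp [subset_iff]

theorem fin_le_last_add_sum_tsub {M : Type*} [AddCommMonoid M] [PartialOrder M]
    [IsOrderedAddMonoid M] [Sub M] [OrderedSub M] {n : ℕ} (a : Fin (n + 1) → M) (m : Fin (n + 1)) :
    a m ≤ a (Fin.last n) + ∑ i : Fin n with m ≤ i.castSucc, (a i.castSucc - a i.succ) := by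
  induction m using Fin.reverseInduction with
  | last => simp
  | cast j ih =>
    have hfilter : ({i : Fin n | j.castSucc ≤ i.castSucc} : Finset (Fin n)) =
        insert j ({i : Fin n | j.succ ≤ i.castSucc} : Finset (Fin n)) := by
      ext i
      simp only [mem_filter, mem_univ, true_and, mem_insert, Fin.le_def, Fin.ext_iff,
        Fin.val_castSucc, Fin.val_succ]
      omega
    rw [hfilter, sum_insert (by simp), add_left_comm]
    calc a j.castSucc ≤ a j.castSucc - a j.succ + a j.succ := le_tsub_add
      _ ≤ _ := by gcongr

theorem sum_powersetCard_inf_castSucc_le {n : ℕ} (l : ℕ) (a : Fin (n + 1) → ℕ)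
    (ha : a (Fin.last n) = 0) :
    ∑ J ∈ powersetCard l univ, a (J.inf Fin.castSucc) ≤
      ∑ i : Fin n, (a i.castSucc - a i.succ) * (n.choose l - (n - (i + 1)).choose l) := by
  calc ∑ J ∈ powersetCard l univ, a (J.inf Fin.castSucc)
      ≤ ∑ J ∈ powersetCard l univ, ∑ i : Fin n with J.inf Fin.castSucc ≤ i.castSucc,
          (a i.castSucc - a i.succ) := by
        gcongr with J
        simpa only [ha, zero_add] using fin_le_last_add_sum_tsub a (J.inf Fin.castSucc)
    _ = ∑ i : Fin n, (a i.castSucc - a i.succ) * #{J ∈ powersetCard l univ | ¬ J ⊆ Ioi i} := by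
        simp_rw [sum_filter, inf_castSucc_le_castSucc_iff]
        rw [sum_comm]
        simp_rw [← sum_filter, sum_const, smul_eq_mul, mul_comm]
    _ = ∑ i : Fin n, (a i.castSucc - a i.succ) * (n.choose l - (n - (i + 1)).choose l) := by
        simp_rw [card_filter_not_subset_powersetCard, Fintype.card_fin, Fin.card_Ioi,
          Nat.sub_sub, Nat.add_comm 1]

end Combinatorics

section SpencerKernel

variable {E F : Type*} [AddCommGroup E] [Module ℝ E] [AddCommGroup F] [Module ℝ F]

theorem vanishingOn_top (m : ℕ) : vanishingOn (V := F) m (⊤ : Submodule ℝ E) = ⊥ :=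
  (Submodule.eq_bot_iff _).2 fun _ hc => AlternatingMap.ext fun u => hc u fun _ => trivial

variable {k l : ℕ} {T : Submodule ℝ (E [⋀^Fin (k + 1)]→ₗ[ℝ] F)}
  {ξ : E [⋀^Fin l]→ₗ[ℝ] (E [⋀^Fin (k + 1)]→ₗ[ℝ] F)}

theorem sum_sign_smul_eq_zero_of_mem_spencerKernel (hξ : ξ ∈ spencerKernel k l T)
    (w : Fin l ⊕ Fin (k + 1) → E) :
    ∑ σ : Perm (Fin l ⊕ Fin (k + 1)),
      Perm.sign σ • ξ (w ∘ σ ∘ Sum.inl) (w ∘ σ ∘ Sum.inr) = 0 := by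
  have h := hξ.2 (w ∘ finSumFinEquiv.symm)
  rw [← finSumFinEquiv.permCongr.sum_comp] at h
  simpa [permCongr_apply, Function.comp_def, Units.smul_def, Int.cast_smul_eq_zsmul] using h

theorem apply_mem_vanishingOn_of_mem_spencerKernel (hξ : ξ ∈ spencerKernel k l T)
    {U : Submodule ℝ E} (hU : ∀ w i, w i ∈ U → ξ w = 0) (w : Fin l → E) :
    ξ w ∈ vanishingOn (k + 1) U := by
  intro u hu
  have hsum := sum_sign_smul_eq_zero_of_mem_spencerKernel hξ (Sum.elim w u)
  rw [sum_perm_sign_smul_apply_eq_factorial_smul ξ _ ?mixed, ← Nat.cast_smul_eq_nsmul ℝ,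
    smul_eq_zero] at hsum
  case mixed =>
    rintro σ ⟨i, j, hij⟩
    exact hU _ i (by simpa [hij] using hu j)
  simpa [Nat.factorial_ne_zero] using hsum

theorem finrank_spencerKernel_le_sum_powersetCard {n : ℕ} [FiniteDimensional ℝ T]
    (e : Basis (Fin n) ℝ E) :
    finrank ℝ (spencerKernel k l T) ≤ ∑ J ∈ powersetCard l (univ : Finset (Fin n)),
      finrank ℝ ↥(T ⊓ vanishingOn (k + 1) (e.flag (J.inf Fin.castSucc))) := by
  rw [sum_subtype (p := (· ∈ Set.powersetCard (Fin n) l)) (F := inferInstance) _ (by simp)]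
  let eval (J : Set.powersetCard (Fin n) l) :
      spencerKernel k l T →ₗ[ℝ] E [⋀^Fin (k + 1)]→ₗ[ℝ] F :=
    { toFun ξ := ξ.1 (e ∘ ofFinEmbEquiv.symm J)
      map_add' _ _ := rfl
      map_smul' _ _ := rfl }
  have hwf := (wellFounded_lt (α := Fin (n + 1))).onFun
    (f := fun J : Set.powersetCard (Fin n) l => J.1.inf Fin.castSucc)
  refine finrank_le_sum_finrank_of_triangular (L := spencerKernel k l T) hwf eval
    (fun J => T ⊓ vanishingOn (k + 1) (e.flag (J.1.inf Fin.castSucc)))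
    (fun ξ J h => ?_) fun ξ h => ?_
  · exact ⟨ξ.2.1 _, apply_mem_vanishingOn_of_mem_spencerKernel ξ.2
      (fun _ _ => alternatingMap_eq_zero_of_mem_flag e ξ.1 _ h) _⟩
  · exact Subtype.ext <| e.ext_alternating fun v _ =>
      alternatingMap_comp_eq_zero_of_sorted ξ.1 e v fun J _ => h J

theorem generalized_cartan_bound_general {n : ℕ} (l : ℕ)
    (T : Submodule ℝ (E [⋀^Fin (k + 1)]→ₗ[ℝ] F)) [FiniteDimensional ℝ T]
    (Wf : Fin (n + 1) → Submodule ℝ E)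
    (hmono : Monotone Wf) (hbot : Wf 0 = ⊥) (htop : Wf (Fin.last n) = ⊤)
    (hdim : ∀ i : Fin (n + 1), finrank ℝ (Wf i) = (i : ℕ)) :
    finrank ℝ ↥(spencerKernel k l T) ≤
      ∑ i : Fin n,
        (finrank ℝ ↥(T ⊓ vanishingOn (k + 1) (Wf i.castSucc)) -
         finrank ℝ ↥(T ⊓ vanishingOn (k + 1) (Wf i.succ))) *
        (Nat.choose n l - Nat.choose (n - ((i : ℕ) + 1)) l) := by
  obtain ⟨e, rfl⟩ := exists_basis_flag_eq Wf hmono hbot htop hdim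
  refine (finrank_spencerKernel_le_sum_powersetCard e).trans (sum_powersetCard_inf_castSucc_le l
    (fun m => finrank ℝ ↥(T ⊓ vanishingOn (k + 1) (e.flag m))) ?_)
  rw [e.flag_last, vanishingOn_top, inf_bot_eq, finrank_bot]

end SpencerKernel

/-- **Generalized Cartan bound**: for a tableau `T ⊆ Λ^{k+1}(W;V)` of `k`-derivations with
trivial symbol, a full flag `0 = W₀ ⊂ … ⊂ Wₙ = W` with Cartan characters `sᵢ`, and `l ≥ 1`,
the kernel `L` of the Spencer differential on `Λ^l(W;T)` satisfies
`dim L ≤ ∑_{i=1}^{n} sᵢ·(C(n,l) − C(n−i,l))`. -/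
theorem generalized_cartan_bound {k n : ℕ} (l : ℕ) (hl : 1 ≤ l)
    (T : Submodule ℝ (AlternatingMap ℝ W V (Fin (k + 1))))
    (Wf : Fin (n + 1) → Submodule ℝ W)
    (hmono : Monotone Wf) (hbot : Wf 0 = ⊥) (htop : Wf (Fin.last n) = ⊤)
    (hdim : ∀ i : Fin (n + 1), finrank ℝ (Wf i) = (i : ℕ)) :
    finrank ℝ ↥(spencerKernel k l T) ≤
      ∑ i : Fin n,
        (finrank ℝ ↥(T ⊓ vanishingOn (k + 1) (Wf i.castSucc)) -
         finrank ℝ ↥(T ⊓ vanishingOn (k + 1) (Wf i.succ))) *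
        (Nat.choose n l - Nat.choose (n - ((i : ℕ) + 1)) l) :=
  generalized_cartan_bound_general l T Wf hmono hbot htop hdim
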